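/- arXiv:2510.17112 — 2 statements merged into one kernel-verified Lean document; each statement's English description precedes it below -/
import Mathlib

section
/- For every positive integer m, the Minkowski dimension of the union ⋃_{p=1}^m C_p equals 1/2; equivalently, lim_{δ→0⁺} log λ(V_δ(⋃_{p=1}^m C_p)) / log δ = 1/2. -/
open MeasureTheory Filter Set

/-- The closed `δ`-neighbourhood `V_δ(Ω) = {x : ∃ y ∈ Ω, |x - y| ≤ δ}`. -/
def closedNbhd (Ω : Set ℝ) (δ : ℝ) : Set ℝ := {x : ℝ | ∃ y ∈ Ω, |x - y| ≤ δ}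

/-- The value `g(a₁ ⋯ a_k) = 1/(a₁ + 1/(a₂ + ⋯ + 1/a_k))` of a finite continued fraction. -/
noncomputable def cfVal : List ℕ → ℝ
  | [] => 0
  | a :: t => 1 / ((a : ℝ) + cfVal t)

/-- A word of positive integers whose last letter (if any) is at least `2`. -/
def isCFWord (a : List ℕ) : Prop := (∀ x ∈ a, 1 ≤ x) ∧ ∀ ℓ ∈ a.getLast?, 2 ≤ ℓ

/-- `C_p`: the set of rationals in `(0,1)` whose continued fraction expansion
has length `p`. -/
def Cset (p : ℕ) : Set ℝ :=
  {x : ℝ | ∃ a : List ℕ, a.length = p ∧ isCFWord a ∧ x = cfVal a}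

def Sset (k : ℕ) : Set ℝ :=
  {x : ℝ | ∃ l : List ℕ, l.length ≤ k ∧ (∀ y ∈ l, 1 ≤ y) ∧ x = cfVal l}

lemma cfVal_nonneg (l : List ℕ) : 0 ≤ cfVal l := by
  induction l with
  | nil => simp [cfVal]
  | cons a t ih => simp only [cfVal]; positivity

lemma lip_aux (a : ℝ) (ha : 1 ≤ a) (x y : ℝ) (hx : 0 ≤ x) (hy : 0 ≤ y) (d : ℝ)
    (h : |x - y| ≤ a ^ 2 * d) : |1 / (a + x) - 1 / (a + y)| ≤ d := by
  have h1 : 0 < a + x := by linarith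
  have h2 : 0 < a + y := by linarith
  have hd : 0 ≤ d := by
    have := (abs_nonneg _).trans h
    by_contra hc
    push Not at hc
    have : a ^ 2 * d < 0 := mul_neg_of_pos_of_neg (by positivity) hc
    linarith
  have e : 1 / (a + x) - 1 / (a + y) = (y - x) / ((a + x) * (a + y)) := by
    field_simp
    ring
  rw [e, abs_div, abs_of_pos (mul_pos h1 h2), div_le_iff₀ (mul_pos h1 h2), abs_sub_comm]
  refine h.trans ?_
  have : a ^ 2 ≤ (a + x) * (a + y) := by nlinarith [mul_nonneg hx hy]
  nlinarith

lemma cover (t : ℝ) (ht : 1 / 2 < t) (k : ℕ) : ∃ K : ℝ, 0 < K ∧ ∀ δ : ℝ, 0 < δ → δ ≤ 1 →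
    ∃ T : Finset ℝ, (∀ x ∈ T, 0 ≤ x) ∧ (T.card : ℝ) ≤ K * δ ^ (-t) ∧
      ∀ x ∈ Sset k, ∃ y ∈ T, |x - y| ≤ δ := by
  induction k with
  | zero =>
    refine ⟨1, one_pos, fun δ h0 h1 => ⟨{0}, by simp, ?_, ?_⟩⟩
    · simpa using Real.one_le_rpow_of_pos_of_le_one_of_nonpos h0 h1 (by linarith)
    · rintro x ⟨l, hl, -, rfl⟩
      have : l = [] := by simpa using hl
      subst this
      exact ⟨0, by simp, by simp [cfVal, h0.le]⟩
  | succ k ih =>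
    obtain ⟨K, hK, ih⟩ := ih
    have hsum : Summable (fun n : ℕ => (n : ℝ) ^ (-(2 * t))) :=
      Real.summable_nat_rpow.2 (by linarith)
    set Z := ∑' n : ℕ, (n : ℝ) ^ (-(2 * t)) with hZ
    have hZ0 : 0 ≤ Z := tsum_nonneg fun n => by positivity
    refine ⟨K * Z + 2, by positivity, fun δ h0 h1 => ?_⟩
    set u : ℝ := (Real.sqrt δ)⁻¹ with hu
    have hs : 0 < Real.sqrt δ := Real.sqrt_pos.2 h0
    have hss : Real.sqrt δ * Real.sqrt δ = δ := Real.mul_self_sqrt h0.le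
    have hu0 : 0 < u := by positivity
    have hus : u * Real.sqrt δ = 1 := inv_mul_cancel₀ hs.ne'
    have huu : u * u * δ = 1 := by
      rw [← hss]; calc _ = (u * Real.sqrt δ) * (u * Real.sqrt δ) := by ring
        _ = 1 := by rw [hus]; ring
    have hu1 : 1 ≤ u := by
      by_contra hc
      push Not at hc
      nlinarith [mul_pos hu0 h0]
    have hut : u ≤ δ ^ (-t) := by
      rw [hu, Real.sqrt_eq_rpow, ← Real.rpow_neg h0.le]
      exact Real.rpow_le_rpow_of_exponent_ge h0 h1 (by linarith)
    have key : ∀ a : ℕ, ∃ T : Finset ℝ, 1 ≤ a → (a : ℝ) ≤ u → (∀ x ∈ T, 0 ≤ x) ∧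
        (T.card : ℝ) ≤ K * ((a : ℝ) ^ 2 * δ) ^ (-t) ∧
        ∀ x ∈ Sset k, ∃ y ∈ T, |x - y| ≤ (a : ℝ) ^ 2 * δ := by
      intro a
      by_cases h : 1 ≤ a ∧ (a : ℝ) ≤ u
      · have ha : (1 : ℝ) ≤ a := by exact_mod_cast h.1
        obtain ⟨T, hT⟩ := ih ((a : ℝ) ^ 2 * δ) (by positivity) (by
          rw [← huu]
          have := h.2
          have : (a : ℝ) ^ 2 ≤ u * u := by nlinarith
          exact mul_le_mul_of_nonneg_right this h0.le)
        exact ⟨T, fun _ _ => hT⟩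
      · exact ⟨∅, fun h1 h2 => absurd ⟨h1, h2⟩ h⟩
    choose T hT using key
    set N := ⌊u⌋₊ + 1 with hN
    let T0 : Finset ℝ := (Finset.range N).image (fun j : ℕ => (j : ℝ) * δ)
    let T1 : Finset ℝ := (Finset.Ico 1 N).biUnion
      (fun a => (T a).image (fun y => 1 / ((a : ℝ) + y)))
    have hNu : ∀ a : ℕ, a < N → (a : ℝ) ≤ u := fun a ha =>
      (Nat.le_floor_iff hu0.le).1 (Nat.lt_succ_iff.1 ha)
    refine ⟨T0 ∪ T1, ?_, ?_, ?_⟩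
    · intro x hx
      rw [Finset.mem_union] at hx
      rcases hx with hx | hx
      · simp only [T0, Finset.mem_image] at hx
        obtain ⟨j, -, rfl⟩ := hx
        positivity
      · simp only [T1, Finset.mem_biUnion, Finset.mem_image, Finset.mem_Ico] at hx
        obtain ⟨a, ⟨ha1, ha2⟩, y, hy, rfl⟩ := hx
        have := (hT a ha1 (hNu a ha2)).1 y hy
        positivity
    · have c0 : (T0.card : ℝ) ≤ 2 * δ ^ (-t) := by
        have : T0.card ≤ N := by
          simpa using (Finset.card_image_le (s := Finset.range N) (f := fun j : ℕ => (j : ℝ) * δ))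
        have h2 : (T0.card : ℝ) ≤ N := by exact_mod_cast this
        have h3 : (N : ℝ) ≤ u + 1 := by
          rw [hN]; push_cast; linarith [Nat.floor_le hu0.le]
        linarith
      have c1 : (T1.card : ℝ) ≤ K * Z * δ ^ (-t) := by
        have s1 : T1.card ≤ ∑ a ∈ Finset.Ico 1 N, (T a).card :=
          Finset.card_biUnion_le.trans (Finset.sum_le_sum fun a _ => Finset.card_image_le)
        calc (T1.card : ℝ) ≤ ∑ a ∈ Finset.Ico 1 N, ((T a).card : ℝ) := by exact_mod_cast s1
          _ ≤ ∑ a ∈ Finset.Ico 1 N, K * δ ^ (-t) * (a : ℝ) ^ (-(2 * t)) := by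
            refine Finset.sum_le_sum fun a ha => ?_
            rw [Finset.mem_Ico] at ha
            refine (hT a ha.1 (hNu a ha.2)).2.1.trans (le_of_eq ?_)
            rw [Real.mul_rpow (by positivity) h0.le, ← Real.rpow_natCast (a : ℝ) 2,
              ← Real.rpow_mul (by positivity)]
            have : ((2 : ℕ) : ℝ) * -t = -(2 * t) := by push_cast; ring
            rw [this]; ring
          _ = K * δ ^ (-t) * ∑ a ∈ Finset.Ico 1 N, (a : ℝ) ^ (-(2 * t)) := by
            rw [Finset.mul_sum]
          _ ≤ K * δ ^ (-t) * Z := by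
            refine mul_le_mul_of_nonneg_left ?_ (by positivity)
            exact hsum.sum_le_tsum _ (fun n _ => by positivity)
          _ = _ := by ring
      have : ((T0 ∪ T1).card : ℝ) ≤ T0.card + T1.card := by
        exact_mod_cast Finset.card_union_le T0 T1
      linarith
    · have tail : ∀ x : ℝ, 0 ≤ x → x ≤ Real.sqrt δ → ∃ y ∈ T0 ∪ T1, |x - y| ≤ δ := by
        intro x hx0 hx
        have hxd : 0 ≤ x / δ := by positivity
        refine ⟨(⌊x / δ⌋₊ : ℝ) * δ, ?_, ?_⟩
        · refine Finset.mem_union_left _ (Finset.mem_image.2 ⟨_, ?_, rfl⟩)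
          rw [Finset.mem_range, hN, Nat.lt_succ_iff]
          refine Nat.floor_mono ?_
          rw [div_le_iff₀ h0]
          have : u * δ = Real.sqrt δ := by
            calc u * δ = u * (Real.sqrt δ * Real.sqrt δ) := by rw [hss]
              _ = Real.sqrt δ := by rw [← mul_assoc, hus, one_mul]
          linarith
        · have e1 := Nat.floor_le hxd
          have e2 := Nat.lt_floor_add_one (x / δ)
          rw [le_div_iff₀ h0] at e1
          rw [div_lt_iff₀ h0] at e2
          rw [abs_le]
          constructor <;> linarith
      rintro x ⟨l, hl, hpos, rfl⟩
      cases l with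
      | nil => exact tail _ (by simp [cfVal]) (by simpa [cfVal] using hs.le)
      | cons a l =>
        have ha1 : 1 ≤ a := hpos a (by simp)
        have ha1' : (1 : ℝ) ≤ a := by exact_mod_cast ha1
        have hnn := cfVal_nonneg l
        by_cases haN : a < N
        · obtain ⟨q1, q2, q3⟩ := hT a ha1 (hNu a haN)
          obtain ⟨y, hy, hxy⟩ := q3 (cfVal l)
            ⟨l, by simpa using hl, fun y hy => hpos y (by simp [hy]), rfl⟩
          refine ⟨1 / ((a : ℝ) + y), Finset.mem_union_right _ ?_, ?_⟩
          · exact Finset.mem_biUnion.2 ⟨a, Finset.mem_Ico.2 ⟨ha1, haN⟩,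
              Finset.mem_image.2 ⟨y, hy, rfl⟩⟩
          · exact lip_aux a ha1' _ _ hnn (q1 y hy) _ hxy
        · push Not at haN
          have hua : u ≤ a := by
            have h3 : (N : ℝ) ≤ a := by exact_mod_cast haN
            have := Nat.lt_floor_add_one u
            rw [hN] at h3
            push_cast at h3
            linarith
          refine tail _ (cfVal_nonneg _) ?_
          simp only [cfVal]
          rw [div_le_iff₀ (by linarith)]
          nlinarith

lemma union_sub (m : ℕ) : (⋃ (p : ℕ) (_ : 1 ≤ p) (_ : p ≤ m), Cset p) ⊆ Sset m := by
  intro x hx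
  simp only [mem_iUnion] at hx
  obtain ⟨p, -, hp, l, hl, hw, rfl⟩ := hx
  exact ⟨l, by omega, hw.1, rfl⟩

lemma vol_upper (t : ℝ) (ht : 1 / 2 < t) (m : ℕ) : ∃ K : ℝ, 0 < K ∧ ∀ δ : ℝ, 0 < δ → δ ≤ 1 →
    volume (closedNbhd (⋃ (p : ℕ) (_ : 1 ≤ p) (_ : p ≤ m), Cset p) δ)
      ≤ ENNReal.ofReal (K * δ ^ (1 - t)) := by
  obtain ⟨K, hK, h⟩ := cover t ht m
  refine ⟨4 * K, by positivity, fun δ h0 h1 => ?_⟩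
  obtain ⟨T, -, hc, hT⟩ := h δ h0 h1
  have sub : closedNbhd (⋃ (p : ℕ) (_ : 1 ≤ p) (_ : p ≤ m), Cset p) δ ⊆
      ⋃ y ∈ T, Icc (y - 2 * δ) (y + 2 * δ) := by
    rintro x ⟨z, hz, hxz⟩
    obtain ⟨y, hy, hzy⟩ := hT z (union_sub m hz)
    simp only [mem_iUnion]
    refine ⟨y, hy, ?_⟩
    rw [abs_le] at hxz hzy
    constructor <;> linarith
  calc _ ≤ _ := measure_mono sub
    _ ≤ ∑ y ∈ T, volume (Icc (y - 2 * δ) (y + 2 * δ)) := measure_biUnion_finset_le _ _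
    _ = ∑ y ∈ T, ENNReal.ofReal (4 * δ) := by
      refine Finset.sum_congr rfl fun y _ => ?_
      rw [Real.volume_Icc]; congr 1; ring
    _ = ENNReal.ofReal (T.card * (4 * δ)) := by
      rw [Finset.sum_const, nsmul_eq_mul, ENNReal.ofReal_mul (p := (T.card : ℝ)) (by positivity),
        ENNReal.ofReal_natCast]
    _ ≤ _ := by
      refine ENNReal.ofReal_le_ofReal ?_
      rw [sub_eq_add_neg, Real.rpow_add h0, Real.rpow_one]
      nlinarith

lemma vol_lower (m : ℕ) (hm : 0 < m) (δ : ℝ) (h0 : 0 < δ) (h1 : δ < 1) :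
    ENNReal.ofReal (Real.sqrt δ / 2) ≤
      volume (closedNbhd (⋃ (p : ℕ) (_ : 1 ≤ p) (_ : p ≤ m), Cset p) δ) := by
  have hs : 0 < Real.sqrt δ := Real.sqrt_pos.2 h0
  have hss : Real.sqrt δ * Real.sqrt δ = δ := Real.mul_self_sqrt h0.le
  have hs1 : Real.sqrt δ < 1 := by nlinarith
  have sub : Ioc 0 (Real.sqrt δ / 2) ⊆
      closedNbhd (⋃ (p : ℕ) (_ : 1 ≤ p) (_ : p ≤ m), Cset p) δ := by
    rintro x ⟨hx0, hx⟩
    set a := ⌊1 / x⌋₊ with ha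
    have hi : 0 < 1 / x := by positivity
    have e1 := Nat.floor_le hi.le
    have e2 := Nat.lt_floor_add_one (1 / x)
    rw [← ha] at e1 e2
    have hx2 : 2 ≤ 1 / x := by
      rw [le_div_iff₀ hx0]; linarith
    have ha2 : 2 ≤ a := Nat.le_floor (by exact_mod_cast hx2)
    have ha2' : (2 : ℝ) ≤ a := by exact_mod_cast ha2
    refine ⟨1 / (a : ℝ), ?_, ?_⟩
    · simp only [mem_iUnion]
      refine ⟨1, le_rfl, hm, [a], rfl, ⟨?_, ?_⟩, by simp [cfVal]⟩
      · intro y hy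
        have : y = a := by simpa using hy
        omega
      · intro y hy
        have : a = y := by simpa using hy
        omega
    · have hapos : (0 : ℝ) < a := by linarith
      rw [le_div_iff₀ hx0] at e1
      rw [div_lt_iff₀ hx0] at e2
      have e : x - 1 / (a : ℝ) = (a * x - 1) / a := by field_simp
      rw [e, abs_div, abs_of_pos hapos, div_le_iff₀ hapos, abs_le]
      -- 1 - a x < x, need x ≤ δ a, a ≥ 1/(2x)... 
      have : x ≤ δ * a := by
        have h3 : 1 ≤ 2 * (a * x) := by nlinarith
        have h4 : 4 * (x * x) ≤ δ := by nlinarith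
        have h5 : 2 * x * 1 ≤ 2 * x * (2 * (a * x)) := mul_le_mul_of_nonneg_left h3 (by positivity)
        have h6 : 4 * (x * x) * a ≤ δ * a := mul_le_mul_of_nonneg_right h4 hapos.le
        nlinarith
      constructor <;> nlinarith
  calc _ = volume (Ioc 0 (Real.sqrt δ / 2)) := by rw [Real.volume_Ioc, sub_zero]
    _ ≤ _ := measure_mono sub

/-- The Minkowski dimension of `⋃_{p=1}^m C_p` is `1/2`:
`lim_{δ → 0⁺} log λ(V_δ(⋃_{p=1}^m C_p)) / log δ = 1/2`. -/
theorem minkowski_dim_union_Cp (m : ℕ) (hm : 0 < m) :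
    Tendsto
      (fun δ : ℝ =>
        Real.log (volume (closedNbhd (⋃ (p : ℕ) (_ : 1 ≤ p) (_ : p ≤ m), Cset p) δ)).toReal /
          Real.log δ)
      (nhdsWithin (0 : ℝ) (Set.Ioi 0)) (nhds (1 / 2 : ℝ)) := by
  have hlog : ∀ c : ℝ, ∀ b : ℝ, Tendsto (fun δ : ℝ => b + c / Real.log δ)
      (nhdsWithin (0 : ℝ) (Set.Ioi 0)) (nhds b) := by
    intro c b
    have := (Real.tendsto_log_nhdsGT_zero).const_div_atBot c
    simpa using this.const_add b
  have hsm : ∀ᶠ δ : ℝ in nhdsWithin (0 : ℝ) (Set.Ioi 0), 0 < δ ∧ δ < 1 :=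
    Ioo_mem_nhdsGT one_pos
  have lowr : ∀ δ : ℝ, 0 < δ → δ < 1 → Real.sqrt δ / 2 ≤
      (volume (closedNbhd (⋃ (p : ℕ) (_ : 1 ≤ p) (_ : p ≤ m), Cset p) δ)).toReal := by
    intro δ h0 h1
    obtain ⟨K, hK, h⟩ := vol_upper 1 (by norm_num) m
    have hfin := ne_top_of_le_ne_top ENNReal.ofReal_ne_top (h δ h0 h1.le)
    exact (ENNReal.ofReal_le_iff_le_toReal hfin).1 (vol_lower m hm δ h0 h1)
  rw [tendsto_order]
  constructor
  · intro b hb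
    set t : ℝ := 1 - (b + 1 / 2) / 2 with ht
    obtain ⟨K, hK, h⟩ := vol_upper t (by linarith) m
    have hev := (hlog (Real.log K) (1 - t)).eventually (lt_mem_nhds (show b < 1 - t by linarith))
    filter_upwards [hev, hsm] with δ hδ hd
    refine hδ.trans_le ?_
    obtain ⟨h0, h1⟩ := hd
    have hl : Real.log δ < 0 := Real.log_neg h0 h1
    have hp : 0 < Real.sqrt δ := Real.sqrt_pos.2 h0
    have hv := lowr δ h0 h1
    have hup := ENNReal.toReal_le_of_le_ofReal (by positivity) (h δ h0 h1.le)
    have := Real.log_le_log (by linarith) hup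
    rw [Real.log_mul hK.ne' (by positivity), Real.log_rpow h0] at this
    rw [le_div_iff_of_neg hl, add_mul, div_mul_cancel₀ _ hl.ne]
    linarith
  · intro b hb
    have hev := (hlog (-Real.log 2) (1 / 2)).eventually (gt_mem_nhds hb)
    filter_upwards [hev, hsm] with δ hδ hd
    refine lt_of_le_of_lt ?_ hδ
    obtain ⟨h0, h1⟩ := hd
    have hl : Real.log δ < 0 := Real.log_neg h0 h1
    have hp : 0 < Real.sqrt δ := Real.sqrt_pos.2 h0
    have := Real.log_le_log (by positivity) (lowr δ h0 h1)
    rw [Real.log_div hp.ne' (by norm_num), Real.log_sqrt h0.le] at this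
    rw [div_le_iff_of_neg hl, add_mul, div_mul_cancel₀ _ hl.ne]
    linarith
end

section
/- Let m, n be positive integers, let 0 ≤ k ≤ m, and let a ∈ D_{m−k} be ENF-good with respect to (m,n), i.e., π(a)·(a_{m−k})^{k+1} ≤ n^{m+1} when m − k ≥ 1 (no condition when a is the empty word). Set γ_{m,n}(a) = (n^{m+1}/π(a))^{1/(k+1)}. Then X_{m,a} can be covered by at most ((3k+1)·γ_{m,n}(a))^k closed intervals of length n^{−(m+1)}. -/
open Set

/-- `f(a₁ ⋯ a_k) = Σ_{i=1}^k 1/(a₁a₂⋯aᵢ)`, the value of an Engel fraction,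
with `f(∅) = 0`. -/
noncomputable def engelVal : List ℕ → ℝ
  | [] => 0
  | a :: t => (1 + engelVal t) / (a : ℝ)

/-- A nondecreasing word of positive integers (a member of `D_k` when of length `k`). -/
def isEngelWord (a : List ℕ) : Prop := (∀ x ∈ a, 1 ≤ x) ∧ List.Pairwise (· ≤ ·) a

/-- `X_{m,a} = {f(b) : b ∈ S_{m,a}}`, where `S_{m,a}` is the set of nondecreasing words
of positive integers of length at most `m` having `a` as a prefix. -/
def Xset (m : ℕ) (a : List ℕ) : Set ℝ :=
  {x : ℝ | ∃ b : List ℕ, isEngelWord b ∧ a <+: b ∧ b.length ≤ m ∧ x = engelVal b}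

/-- `Ω` can be covered by at most `B` closed intervals of length `r`. -/
def CoveredBy (Ω : Set ℝ) (r B : ℝ) : Prop :=
  ∃ t : Finset ℝ, (t.card : ℝ) ≤ B ∧ Ω ⊆ ⋃ c ∈ t, Set.Icc c (c + r)


/-- Values of nondecreasing words with letters `≥ q` and length `≤ k`. -/
def Yset (k q : ℕ) : Set ℝ :=
  {y : ℝ | ∃ c : List ℕ, (∀ x ∈ c, q ≤ x) ∧ List.Pairwise (· ≤ ·) c ∧ c.length ≤ k ∧
    y = engelVal c}

lemma CoveredBy.mono {Ω Ω' : Set ℝ} {r B B' : ℝ} (h : CoveredBy Ω r B) (hs : Ω' ⊆ Ω)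
    (hB : B ≤ B') : CoveredBy Ω' r B' := by
  obtain ⟨t, h1, h2⟩ := h
  exact ⟨t, h1.trans hB, hs.trans h2⟩

lemma CoveredBy.union {Ω Ω' : Set ℝ} {r B B' : ℝ} (h : CoveredBy Ω r B)
    (h' : CoveredBy Ω' r B') : CoveredBy (Ω ∪ Ω') r (B + B') := by
  classical
  obtain ⟨t, h1, h2⟩ := h
  obtain ⟨t', h1', h2'⟩ := h'
  refine ⟨t ∪ t', ?_, ?_⟩
  · have : ((t ∪ t').card : ℝ) ≤ t.card + t'.card := by exact_mod_cast Finset.card_union_le _ _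
    linarith
  · rintro x (hx | hx)
    · have := h2 hx
      simp only [mem_iUnion] at this ⊢
      obtain ⟨c, hc, hxc⟩ := this
      exact ⟨c, Finset.mem_union_left _ hc, hxc⟩
    · have := h2' hx
      simp only [mem_iUnion] at this ⊢
      obtain ⟨c, hc, hxc⟩ := this
      exact ⟨c, Finset.mem_union_right _ hc, hxc⟩

lemma CoveredBy.biUnion (s : Finset ℕ) (Ω : ℕ → Set ℝ) (r : ℝ) (B : ℕ → ℝ)
    (h : ∀ i ∈ s, CoveredBy (Ω i) r (B i)) :
    CoveredBy (⋃ i ∈ s, Ω i) r (∑ i ∈ s, B i) := by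
  classical
  induction s using Finset.induction_on with
  | empty => exact ⟨∅, by simp, by simp⟩
  | insert i s hi ih =>
    rw [Finset.sum_insert hi]
    refine ((h i (by simp)).union (ih fun j hj => h j (by simp [hj]))).mono ?_ le_rfl
    simp

/-- Affine images. -/
lemma CoveredBy.affine {Ω : Set ℝ} {r B : ℝ} (h : CoveredBy Ω r B) (s d : ℝ) (hd : 0 < d) :
    CoveredBy ((fun z => s + z / d) '' Ω) (r / d) B := by
  classical
  obtain ⟨t, h1, h2⟩ := h
  refine ⟨t.image (fun z => s + z / d), ?_, ?_⟩
  · exact le_trans (by exact_mod_cast Finset.card_image_le) h1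
  · rintro _ ⟨z, hz, rfl⟩
    have := h2 hz
    simp only [mem_iUnion] at this ⊢
    obtain ⟨c, hc, hxc⟩ := this
    refine ⟨s + c / d, Finset.mem_image_of_mem _ hc, ?_, ?_⟩
    · have := div_le_div_of_nonneg_right hxc.1 hd.le
      simpa using this
    · have := div_le_div_of_nonneg_right hxc.2 hd.le
      rw [add_div] at this
      linarith

lemma coveredBy_Icc (L R : ℝ) (hL : 0 ≤ L) (hR : 0 < R) :
    CoveredBy (Set.Icc 0 L) R⁻¹ (R * L + 1) := by
  classical
  refine ⟨(Finset.range (⌊R * L⌋₊ + 1)).image (fun i : ℕ => (i : ℝ) / R), ?_, ?_⟩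
  · have h1 : (((Finset.range (⌊R * L⌋₊ + 1)).image (fun i : ℕ => (i : ℝ) / R)).card : ℝ)
        ≤ (⌊R * L⌋₊ + 1 : ℕ) := by
      have := Finset.card_image_le (s := Finset.range (⌊R * L⌋₊ + 1))
        (f := fun i : ℕ => (i : ℝ) / R)
      rw [Finset.card_range] at this
      exact_mod_cast this
    have h2 := Nat.floor_le (show 0 ≤ R * L by positivity)
    push_cast at h1
    linarith
  · rintro x ⟨hx0, hxL⟩
    simp only [mem_iUnion]
    refine ⟨(⌊R * x⌋₊ : ℝ) / R, ?_, ?_, ?_⟩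
    · refine Finset.mem_image.2 ⟨⌊R * x⌋₊, ?_, rfl⟩
      rw [Finset.mem_range, Nat.lt_succ_iff]
      exact Nat.floor_le_floor (by gcongr)
    · rw [div_le_iff₀ hR, mul_comm]
      exact Nat.floor_le (by positivity)
    · have := (Nat.lt_floor_add_one (R * x)).le
      rw [inv_eq_one_div, ← add_div, le_div_iff₀ hR, mul_comm]
      exact this

lemma engelVal_nonneg (c : List ℕ) : 0 ≤ engelVal c := by
  induction c with
  | nil => simp [engelVal]
  | cons x t ih => simp only [engelVal]; positivity

lemma engelVal_le (M : ℕ) (hM : 1 ≤ M) (c : List ℕ) (hc : ∀ x ∈ c, M + 1 ≤ x) :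
    engelVal c ≤ 1 / (M : ℝ) := by
  have hM' : (1 : ℝ) ≤ M := by exact_mod_cast hM
  induction c with
  | nil => simp [engelVal]
  | cons x t ih =>
    have h1 := ih fun y hy => hc y (by simp [hy])
    have h2 : ((M : ℝ) + 1) ≤ x := by exact_mod_cast hc x (by simp)
    simp only [engelVal]
    rw [div_le_iff₀ (by linarith)]
    calc 1 + engelVal t ≤ 1 + 1 / (M : ℝ) := by linarith
      _ = 1 / (M : ℝ) * (M + 1) := by field_simp
      _ ≤ 1 / (M : ℝ) * x := by gcongr

lemma engelVal_append (a c : List ℕ) (ha : ∀ x ∈ a, 1 ≤ x) :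
    engelVal (a ++ c) = engelVal a + engelVal c / (a.prod : ℝ) := by
  induction a with
  | nil => simp [engelVal]
  | cons x t ih =>
    have hx : (x : ℝ) ≠ 0 := by
      have := ha x (by simp)
      exact_mod_cast (by omega : x ≠ 0)
    have hp : ((t.map (fun n : ℕ => (n : ℝ))).prod) = ((t.prod : ℕ) : ℝ) := by
      simp
    have hp' : ((t.prod : ℕ) : ℝ) ≠ 0 := by
      have : t.prod ≠ 0 := by
        apply List.prod_ne_zero
        intro h
        have := ha 0 (by simp [h])
        omega
      exact_mod_cast this
    simp only [List.cons_append, engelVal, List.prod_cons, Nat.cast_mul]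
    rw [ih fun y hy => ha y (by simp [hy])]
    field_simp
    ring

lemma telescope (k M : ℕ) :
    ∑ x ∈ Finset.Icc 1 M, ((((x : ℝ) ^ ((1 : ℝ) / ((k : ℝ) + 1))) ^ k)⁻¹)
      ≤ ((k : ℝ) + 1) * (M : ℝ) ^ ((1 : ℝ) / ((k : ℝ) + 1)) := by
  induction M with
  | zero => simp; positivity
  | succ M ih =>
    rw [Finset.sum_Icc_succ_top (by omega)]
    set u := ((M + 1 : ℕ) : ℝ) ^ ((1 : ℝ) / ((k : ℝ) + 1)) with hu
    set v := (M : ℝ) ^ ((1 : ℝ) / ((k : ℝ) + 1)) with hv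
    have hu0 : 0 < u := by positivity
    have hv0 : 0 ≤ v := by positivity
    have e1 : u ^ (k + 1) = M + 1 := by
      rw [hu, ← Real.rpow_natCast, ← Real.rpow_mul (by positivity)]
      push_cast
      rw [one_div_mul_cancel (by positivity), Real.rpow_one]
    have e2 : v ^ (k + 1) = M := by
      rw [hv, ← Real.rpow_natCast, ← Real.rpow_mul (by positivity)]
      push_cast
      rw [one_div_mul_cancel (by positivity), Real.rpow_one]
    have hb := one_add_mul_le_pow (a := v / u - 1) (by
      have : 0 ≤ v / u := by positivity
      linarith) (k + 1)
    rw [add_sub_cancel, div_pow, le_div_iff₀ (by positivity), e2] at hb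
    have e3 : u ^ (k + 1) = u ^ k * u := pow_succ _ _
    have hvu : v / u * u = v := by field_simp
    have key : 1 ≤ ((k : ℝ) + 1) * (u - v) * u ^ k := by
      have : (1 + ((k + 1 : ℕ) : ℝ) * (v / u - 1)) * u ^ (k + 1)
          = u ^ (k + 1) + ((k : ℝ) + 1) * (v / u * u - u) * u ^ k := by
        rw [e3]; push_cast; ring
      rw [this, hvu, e1] at hb
      linarith
    have key2 : (u ^ k)⁻¹ ≤ ((k : ℝ) + 1) * (u - v) := by
      rw [inv_eq_one_div, div_le_iff₀ (by positivity)]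
      exact key
    linarith

lemma Yset_cover (k : ℕ) : ∀ (q : ℕ) (R : ℝ), 1 ≤ q → (q : ℝ) ^ (k + 1) ≤ R →
    CoveredBy (Yset k q) R⁻¹ (((3 * (k : ℝ) + 1) * R ^ ((1 : ℝ) / ((k : ℝ) + 1))) ^ k) := by
  induction k with
  | zero =>
    intro q R hq hR
    have hR0 : 0 ≤ R := le_trans (by positivity) hR
    refine ⟨{0}, by simp, ?_⟩
    rintro _ ⟨c, -, -, hc, rfl⟩
    have : c = [] := by simpa using hc
    subst this
    simp [engelVal, hR0]
  | succ k ih =>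
    intro q R hq hR
    have hq' : (1 : ℝ) ≤ q := by exact_mod_cast hq
    have hR1 : 1 ≤ R := le_trans (one_le_pow₀ hq') hR
    have hR0 : 0 < R := by linarith
    set γ : ℝ := R ^ ((1 : ℝ) / (((k + 1 : ℕ) : ℝ) + 1)) with hγ
    have hγ0 : 0 < γ := by positivity
    have hγR : γ ^ (k + 2) = R := by
      rw [hγ, ← Real.rpow_natCast, ← Real.rpow_mul (by positivity)]
      push_cast
      rw [show (1 : ℝ) / ((k : ℝ) + 1 + 1) * (k + 2) = 1 by field_simp; ring, Real.rpow_one]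
    have hqγ : (q : ℝ) ≤ γ := by
      rw [← hγR] at hR
      exact le_of_pow_le_pow_left₀ (by omega) hγ0.le hR
    have hγ1 : 1 ≤ γ := hq'.trans hqγ
    set g : ℝ := γ ^ ((1 : ℝ) / ((k : ℝ) + 1)) with hg
    have hg0 : 0 < g := by positivity
    have hgγ : g ^ (k + 1) = γ := by
      rw [hg, ← Real.rpow_natCast, ← Real.rpow_mul (by positivity)]
      push_cast
      rw [one_div_mul_cancel (by positivity), Real.rpow_one]
    have hρ : R ^ ((1 : ℝ) / ((k : ℝ) + 1)) = g ^ (k + 2) := by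
      rw [hg, ← Real.rpow_natCast, ← Real.rpow_mul hγ0.le, mul_comm, Real.rpow_mul hγ0.le,
        Real.rpow_natCast, hγR]
    set M : ℕ := ⌊γ⌋₊ with hM
    have hM1 : 1 ≤ M := Nat.one_le_floor_iff γ |>.2 hγ1
    have hMγ : (M : ℝ) ≤ γ := Nat.floor_le hγ0.le
    have hM1' : (1 : ℝ) ≤ M := by exact_mod_cast hM1
    have hγM : γ ≤ 2 * M := by
      have := (Nat.lt_floor_add_one γ).le
      rw [← hM] at this
      linarith
    -- small first letters
    have hsmall : CoveredBy
        (⋃ x ∈ Finset.Icc 1 M, (fun z => 1 / (x : ℝ) + z / (x : ℝ)) '' Yset k x) R⁻¹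
        (∑ x ∈ Finset.Icc 1 M,
          ((3 * (k : ℝ) + 1) * (R / x) ^ ((1 : ℝ) / ((k : ℝ) + 1))) ^ k) := by
      apply CoveredBy.biUnion
      intro x hx
      rw [Finset.mem_Icc] at hx
      have hx0 : (0 : ℝ) < x := by exact_mod_cast hx.1
      have hxM : (x : ℝ) ≤ M := by exact_mod_cast hx.2
      have h1 := (ih x (R / x) hx.1 (by
        rw [le_div_iff₀ hx0, ← pow_succ, ← hγR]
        gcongr
        linarith)).affine (1 / (x : ℝ)) x hx0
      rwa [inv_div, div_div_cancel_left' hx0.ne'] at h1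
    have hlarge := coveredBy_Icc (1 / (M : ℝ)) R (by positivity) hR0
    refine (hsmall.union hlarge).mono ?_ ?_
    · rintro _ ⟨c, hcq, hcs, hcl, rfl⟩
      rcases c with _ | ⟨x, c⟩
      · right
        simp [engelVal]
      · rw [List.pairwise_cons] at hcs
        by_cases hxM : x ≤ M
        · left
          simp only [mem_iUnion]
          refine ⟨x, Finset.mem_Icc.2 ⟨hq.trans (hcq x (by simp)), hxM⟩, engelVal c,
            ⟨c, hcs.1, hcs.2, by simpa using hcl, rfl⟩, ?_⟩
          simp only [engelVal, add_div]
        · right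
          refine ⟨engelVal_nonneg _, engelVal_le M hM1 _ ?_⟩
          intro y hy
          rcases List.mem_cons.1 hy with rfl | hy
          · omega
          · have := hcs.1 y hy
            omega
    · have hs : ∑ x ∈ Finset.Icc 1 M,
          ((3 * (k : ℝ) + 1) * (R / x) ^ ((1 : ℝ) / ((k : ℝ) + 1))) ^ k
          ≤ (3 * (k : ℝ) + 1) ^ k * ((k : ℝ) + 1) * γ ^ (k + 1) := by
        have : ∀ x ∈ Finset.Icc 1 M,
            ((3 * (k : ℝ) + 1) * (R / x) ^ ((1 : ℝ) / ((k : ℝ) + 1))) ^ k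
            = ((3 * (k : ℝ) + 1) ^ k * (g ^ (k + 2)) ^ k) *
              (((x : ℝ) ^ ((1 : ℝ) / ((k : ℝ) + 1))) ^ k)⁻¹ := by
          intro x _
          rw [Real.div_rpow hR0.le (by positivity), hρ, mul_pow, div_pow]
          ring
        rw [Finset.sum_congr rfl this, ← Finset.mul_sum]
        have hMg : (M : ℝ) ^ ((1 : ℝ) / ((k : ℝ) + 1)) ≤ g :=
          Real.rpow_le_rpow (by positivity) hMγ (by positivity)
        calc _ ≤ ((3 * (k : ℝ) + 1) ^ k * (g ^ (k + 2)) ^ k) *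
              (((k : ℝ) + 1) * (M : ℝ) ^ ((1 : ℝ) / ((k : ℝ) + 1))) :=
              mul_le_mul_of_nonneg_left (telescope k M) (by positivity)
          _ ≤ ((3 * (k : ℝ) + 1) ^ k * (g ^ (k + 2)) ^ k) * (((k : ℝ) + 1) * g) := by gcongr
          _ = (3 * (k : ℝ) + 1) ^ k * ((k : ℝ) + 1) * γ ^ (k + 1) := by
              rw [← hgγ]; ring
      have hl : R * (1 / (M : ℝ)) + 1 ≤ 3 * γ ^ (k + 1) := by
        have h1 : R * (1 / (M : ℝ)) ≤ 2 * γ ^ (k + 1) := by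
          rw [mul_one_div, div_le_iff₀ (by positivity), ← hγR]
          calc γ ^ (k + 2) = γ ^ (k + 1) * γ := pow_succ _ _
            _ ≤ γ ^ (k + 1) * (2 * M) := by gcongr
            _ = _ := by ring
        have h2 : 1 ≤ γ ^ (k + 1) := one_le_pow₀ hγ1
        linarith
      have hc : (3 * (k : ℝ) + 1) ^ k * ((k : ℝ) + 1) + 3 ≤ (3 * (((k + 1 : ℕ) : ℝ)) + 1) ^ (k + 1) := by
        push_cast
        have hA : (3 * (k : ℝ) + 1) ^ k ≤ (3 * ((k : ℝ) + 1) + 1) ^ k := by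
          gcongr; linarith
        have hB : 1 ≤ (3 * ((k : ℝ) + 1) + 1) ^ k := one_le_pow₀ (by
          have : (0 : ℝ) ≤ k := by positivity
          linarith)
        have hk0 : (0 : ℝ) ≤ k := by positivity
        rw [pow_succ]
        nlinarith
      rw [mul_pow]
      calc _ ≤ ((3 * (k : ℝ) + 1) ^ k * ((k : ℝ) + 1) + 3) * γ ^ (k + 1) := by linarith
        _ ≤ _ := by gcongr

/-- Let `m, n ≥ 1`, `0 ≤ k ≤ m`, and let `a ∈ D_{m-k}` be ENF-good with respect to
`(m,n)`, i.e. `π(a)·(last a)^{k+1} ≤ n^{m+1}` (no condition when `a` is empty).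
With `γ_{m,n}(a) = (n^{m+1}/π(a))^{1/(k+1)}`, the set `X_{m,a}` can be covered by at
most `((3k+1)·γ_{m,n}(a))^k` closed intervals of length `n^{-(m+1)}`. -/
theorem engel_covering_count (m n : ℕ) (hm : 0 < m) (hn : 0 < n) (k : ℕ) (hk : k ≤ m)
    (a : List ℕ) (hlen : a.length = m - k) (haD : isEngelWord a)
    (hgood : ∀ h : a ≠ [], (a.prod : ℝ) * (a.getLast h : ℝ) ^ (k + 1) ≤ (n : ℝ) ^ (m + 1)) :
    CoveredBy (Xset m a) (((n : ℝ) ^ (m + 1))⁻¹)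
      (((3 * (k : ℝ) + 1) *
        (((n : ℝ) ^ (m + 1) / (a.prod : ℝ)) ^ ((1 : ℝ) / ((k : ℝ) + 1)))) ^ k) := by
  have hN : (0 : ℝ) < (n : ℝ) ^ (m + 1) := by positivity
  have hn1 : (1 : ℝ) ≤ n := by exact_mod_cast hn
  have hP : (0 : ℝ) < ((a.prod : ℕ) : ℝ) := by
    have : a.prod ≠ 0 := by
      apply List.prod_ne_zero
      intro h
      have := haD.1 0 h
      omega
    exact_mod_cast Nat.pos_of_ne_zero this
  obtain ⟨q, hq1, hqR, hq⟩ : ∃ q : ℕ, 1 ≤ q ∧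
      (q : ℝ) ^ (k + 1) ≤ (n : ℝ) ^ (m + 1) / (a.prod : ℝ) ∧
      ∀ c : List ℕ, isEngelWord (a ++ c) → ∀ x ∈ c, q ≤ x := by
    by_cases h : a = []
    · subst h
      refine ⟨1, le_rfl, ?_, fun c hc x hx => hc.1 x (by simp [hx])⟩
      simpa using one_le_pow₀ hn1
    · refine ⟨a.getLast h, haD.1 _ (List.getLast_mem h), ?_, ?_⟩
      · rw [le_div_iff₀ hP, mul_comm]
        exact hgood h
      · intro c hc x hx
        exact (List.pairwise_append.1 hc.2).2.2 _ (List.getLast_mem h) x hx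
  have hY := (Yset_cover k q _ hq1 hqR).affine (engelVal a) _ hP
  rw [inv_div, div_div_cancel_left' hP.ne'] at hY
  refine hY.mono ?_ le_rfl
  rintro _ ⟨_, hb, ⟨c, rfl⟩, hbl, rfl⟩
  refine ⟨engelVal c, ⟨c, hq c hb, (List.pairwise_append.1 hb.2).2.1, ?_, rfl⟩, ?_⟩
  · rw [List.length_append] at hbl
    omega
  · exact (engelVal_append a c haD.1).symm
end
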